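/- arXiv:2602.17629 — 2 statements merged into one kernel-verified Lean document; each statement's English description precedes it below -/
import Mathlib

section
/- Let b > 0 and let ρ₁, ρ₂ : (0,b) → ℝ be continuously differentiable functions such that ρ₁'(t) + ρ₁(t)² = ρ₂'(t) + ρ₂(t)² for every t ∈ (0,b) and lim_{t→0⁺} (ρᵢ(t) − 1/t) = 0 for i ∈ {1,2}. Then ρ₁(t) = ρ₂(t) for every t ∈ (0,b). -/
open Set Filter Topology

/-!
The difference `u = ρ₁ - ρ₂` satisfies the linear equation `u' + (ρ₁ + ρ₂) u = 0`. Multiplying by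
the integrating factor `exp P`, where `P' = ρ₁ + ρ₂`, makes `u * exp P` constant, and merely
antitone if the Riccati equation is weakened to an inequality. Since `ρ₁ + ρ₂` is bounded below
near the left endpoint, `P` is bounded above there, so `u → 0` forces `u * exp P → 0` and hence
`u ≤ 0`. Exchanging `ρ₁` and `ρ₂` gives equality.
-/

theorem exists_forall_hasDerivAt_of_continuousOn {E : Type*} [NormedAddCommGroup E]
    [NormedSpace ℝ E] [CompleteSpace E] {f : ℝ → E} {s : Set ℝ} (hs : IsOpen s)
    (hs' : s.OrdConnected) (hf : ContinuousOn f s) :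
    ∃ F : ℝ → E, ∀ t ∈ s, HasDerivAt F (f t) t := by
  rcases s.eq_empty_or_nonempty with rfl | ⟨c, hc⟩
  · simp
  · refine ⟨fun t ↦ ∫ x in c..t, f x, fun t ht ↦ ?_⟩
    exact intervalIntegral.integral_hasDerivAt_right
      (hf.mono (hs'.uIcc_subset hc ht)).intervalIntegrable
      (hf.stronglyMeasurableAtFilter hs t ht) (hf.continuousAt (hs.mem_nhds ht))

theorem isBoundedUnder_le_nhdsGT_of_hasDerivAt {F f : ℝ → ℝ} {a : ℝ}
    (hF : ∀ᶠ t in 𝓝[>] a, HasDerivAt F (f t) t)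
    (hf : IsBoundedUnder (· ≥ ·) (𝓝[>] a) f) :
    IsBoundedUnder (· ≤ ·) (𝓝[>] a) F := by
  obtain ⟨m, hm⟩ := hf.eventually_ge
  obtain ⟨c, hac : a < c, hc⟩ := mem_nhdsGT_iff_exists_Ioc_subset.1 (hF.and hm)
  have hderiv (t : ℝ) (ht : t ∈ Ioc a c) :
      HasDerivAt (fun s ↦ F s - m * s) (f t - m) t :=
    ((hc ht).1.sub ((hasDerivAt_id t).const_mul m)).congr_deriv (by rw [mul_one])
  have hmono : MonotoneOn (fun s ↦ F s - m * s) (Ioc a c) :=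
    monotoneOn_of_hasDerivWithinAt_nonneg (convex_Ioc a c)
      (fun t ht ↦ (hderiv t ht).continuousAt.continuousWithinAt)
      (fun t ht ↦ (hderiv t (interior_subset ht)).hasDerivWithinAt)
      (fun t ht ↦ sub_nonneg.2 (hc (interior_subset ht)).2)
  have hlin : IsBoundedUnder (· ≤ ·) (𝓝[>] a) fun t ↦ F c - m * c + m * t :=
    (ContinuousAt.tendsto (by fun_prop)).mono_left nhdsWithin_le_nhds |>.isBoundedUnder_le
  refine hlin.mono_le ?_
  filter_upwards [Ioc_mem_nhdsGT hac] with t ht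
  linarith [hmono ht ⟨hac, le_rfl⟩ ht.2]

theorem antitoneOn_mul_exp_of_add_mul_nonpos {u u' p P : ℝ → ℝ} {s : Set ℝ} (hs : Convex ℝ s)
    (hu : ∀ t ∈ s, HasDerivAt u (u' t) t) (hP : ∀ t ∈ s, HasDerivAt P (p t) t)
    (hle : ∀ t ∈ s, u' t + p t * u t ≤ 0) :
    AntitoneOn (fun t ↦ u t * Real.exp (P t)) s := by
  have hderiv (t : ℝ) (ht : t ∈ s) : HasDerivAt (fun t ↦ u t * Real.exp (P t))
      ((u' t + p t * u t) * Real.exp (P t)) t :=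
    ((hu t ht).mul (hP t ht).exp).congr_deriv (by ring)
  exact antitoneOn_of_hasDerivWithinAt_nonpos hs
    (fun t ht ↦ (hderiv t ht).continuousAt.continuousWithinAt)
    (fun t ht ↦ (hderiv t (interior_subset ht)).hasDerivWithinAt)
    (fun t ht ↦ mul_nonpos_of_nonpos_of_nonneg (hle t (interior_subset ht)) (Real.exp_pos _).le)

theorem nonpos_of_add_mul_nonpos_of_tendsto_nhdsGT {u u' p : ℝ → ℝ} {a b : ℝ}
    (hu : ∀ t ∈ Ioo a b, HasDerivAt u (u' t) t) (hp : ContinuousOn p (Ioo a b))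
    (hp_bdd : IsBoundedUnder (· ≥ ·) (𝓝[>] a) p)
    (hle : ∀ t ∈ Ioo a b, u' t + p t * u t ≤ 0) (hlim : Tendsto u (𝓝[>] a) (𝓝 0)) :
    ∀ t ∈ Ioo a b, u t ≤ 0 := by
  intro t ht
  obtain ⟨P, hP⟩ := exists_forall_hasDerivAt_of_continuousOn isOpen_Ioo ordConnected_Ioo hp
  have hP_bdd : IsBoundedUnder (· ≤ ·) (𝓝[>] a) P :=
    isBoundedUnder_le_nhdsGT_of_hasDerivAt
      (mem_of_superset (Ioo_mem_nhdsGT (ht.1.trans ht.2)) hP) hp_bdd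
  have hlim_exp : Tendsto (fun s ↦ u s * Real.exp (P s)) (𝓝[>] a) (𝓝 0) :=
    hlim.zero_mul_isBoundedUnder_le <| by
      simpa only [Function.comp_def, Real.norm_eq_abs, Real.abs_exp,
        Real.isBoundedUnder_le_exp_comp] using hP_bdd
  have hnonpos : u t * Real.exp (P t) ≤ 0 := by
    refine ge_of_tendsto hlim_exp ?_
    filter_upwards [Ioo_mem_nhdsGT ht.1] with s hs
    exact antitoneOn_mul_exp_of_add_mul_nonpos (convex_Ioo a b) hu hP hle
      ⟨hs.1, hs.2.trans ht.2⟩ ht hs.2.le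
  exact nonpos_of_mul_nonpos_left hnonpos (Real.exp_pos _)

theorem riccati_comparison {ρ₁ ρ₂ ρ₁' ρ₂' : ℝ → ℝ} {a b : ℝ}
    (hd₁ : ∀ t ∈ Ioo a b, HasDerivAt ρ₁ (ρ₁' t) t)
    (hd₂ : ∀ t ∈ Ioo a b, HasDerivAt ρ₂ (ρ₂' t) t)
    (hle : ∀ t ∈ Ioo a b, ρ₁' t + ρ₁ t ^ 2 ≤ ρ₂' t + ρ₂ t ^ 2)
    (hbdd : IsBoundedUnder (· ≥ ·) (𝓝[>] a) (fun t ↦ ρ₁ t + ρ₂ t))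
    (hlim : Tendsto (fun t ↦ ρ₁ t - ρ₂ t) (𝓝[>] a) (𝓝 0)) :
    ∀ t ∈ Ioo a b, ρ₁ t ≤ ρ₂ t := by
  have hcont : ContinuousOn (fun t ↦ ρ₁ t + ρ₂ t) (Ioo a b) := fun t ht ↦
    ((hd₁ t ht).continuousAt.add (hd₂ t ht).continuousAt).continuousWithinAt
  have hlinear (t : ℝ) (ht : t ∈ Ioo a b) :
      ρ₁' t - ρ₂' t + (ρ₁ t + ρ₂ t) * (ρ₁ t - ρ₂ t) ≤ 0 := by
    linarith [hle t ht]
  exact fun t ht ↦ sub_nonpos.1 <| nonpos_of_add_mul_nonpos_of_tendsto_nhdsGT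
    (fun s hs ↦ (hd₁ s hs).sub (hd₂ s hs)) hcont hbdd hlinear hlim t ht

theorem riccati_uniqueness_general {ρ₁ ρ₂ ρ₁' ρ₂' : ℝ → ℝ} {a b : ℝ}
    (hd₁ : ∀ t ∈ Ioo a b, HasDerivAt ρ₁ (ρ₁' t) t)
    (hd₂ : ∀ t ∈ Ioo a b, HasDerivAt ρ₂ (ρ₂' t) t)
    (heq : ∀ t ∈ Ioo a b, ρ₁' t + ρ₁ t ^ 2 = ρ₂' t + ρ₂ t ^ 2)
    (hbdd : IsBoundedUnder (· ≥ ·) (𝓝[>] a) (fun t ↦ ρ₁ t + ρ₂ t))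
    (hlim : Tendsto (fun t ↦ ρ₁ t - ρ₂ t) (𝓝[>] a) (𝓝 0)) :
    ∀ t ∈ Ioo a b, ρ₁ t = ρ₂ t := by
  intro t ht
  have hlim' : Tendsto (fun t ↦ ρ₂ t - ρ₁ t) (𝓝[>] a) (𝓝 0) := by simpa using hlim.neg
  have hbdd' : IsBoundedUnder (· ≥ ·) (𝓝[>] a) (fun t ↦ ρ₂ t + ρ₁ t) := by
    simpa only [add_comm] using hbdd
  exact le_antisymm (riccati_comparison hd₁ hd₂ (fun s hs ↦ (heq s hs).le) hbdd hlim t ht)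
    (riccati_comparison hd₂ hd₁ (fun s hs ↦ (heq s hs).ge) hbdd' hlim' t ht)

theorem tendsto_atTop_of_tendsto_sub_one_div {ρ : ℝ → ℝ} {c : ℝ}
    (h : Tendsto (fun t ↦ ρ t - 1 / t) (𝓝[>] 0) (𝓝 c)) : Tendsto ρ (𝓝[>] 0) atTop := by
  simpa using h.add_atTop tendsto_inv_nhdsGT_zero

/-- **Uniqueness in the Riccati comparison principle.** If `ρ₁, ρ₂ : (0,b) → ℝ`
are `C¹`, satisfy the same Riccati equation `ρ₁' + ρ₁² = ρ₂' + ρ₂²` on `(0,b)`,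
and both behave like `1/t` as `t → 0⁺`, then `ρ₁ = ρ₂` on `(0,b)`. -/
theorem riccati_uniqueness
    (b : ℝ) (hb : 0 < b)
    (ρ₁ ρ₂ ρ₁' ρ₂' : ℝ → ℝ)
    (hd₁ : ∀ t ∈ Ioo (0:ℝ) b, HasDerivAt ρ₁ (ρ₁' t) t)
    (hd₂ : ∀ t ∈ Ioo (0:ℝ) b, HasDerivAt ρ₂ (ρ₂' t) t)
    (hc₁ : ContinuousOn ρ₁' (Ioo (0:ℝ) b))
    (hc₂ : ContinuousOn ρ₂' (Ioo (0:ℝ) b))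
    (heq : ∀ t ∈ Ioo (0:ℝ) b, ρ₁' t + (ρ₁ t) ^ 2 = ρ₂' t + (ρ₂ t) ^ 2)
    (hlim₁ : Tendsto (fun t => ρ₁ t - 1 / t) (𝓝[>] (0:ℝ)) (𝓝 0))
    (hlim₂ : Tendsto (fun t => ρ₂ t - 1 / t) (𝓝[>] (0:ℝ)) (𝓝 0)) :
    ∀ t ∈ Ioo (0:ℝ) b, ρ₁ t = ρ₂ t := by
  have hsum := (tendsto_atTop_of_tendsto_sub_one_div hlim₁).atTop_add_atTop
    (tendsto_atTop_of_tendsto_sub_one_div hlim₂)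
  exact riccati_uniqueness_general hd₁ hd₂ heq hsum.isBoundedUnder_ge_atTop
    (by simpa using hlim₁.sub hlim₂)
end

section
/- Let I ⊆ ℝ be an open interval and let S, R : I → Mat(n×n, ℝ) be maps with S(r) and R(r) symmetric for every r ∈ I, S differentiable, and satisfying the matrix Riccati equation S'(r) = −S(r)² − R(r) for every r ∈ I. Let μ_max(r) denote the largest eigenvalue of S(r). Then at every point r₀ ∈ I where μ_max is differentiable, μ_max'(r₀) ≤ −μ_max(r₀)² − λ_min(R(r₀)), where λ_min(R(r₀)) denotes the smallest eigenvalue of the symmetric matrix R(r₀). -/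
open Set Filter Topology Matrix

/-- `μ` is the largest (real) eigenvalue of the matrix `A`. -/
def IsMaxEigenvalue {n : ℕ} (A : Matrix (Fin n) (Fin n) ℝ) (μ : ℝ) : Prop :=
  (∃ v : Fin n → ℝ, v ≠ 0 ∧ A.mulVec v = μ • v) ∧
  ∀ μ' : ℝ, (∃ v : Fin n → ℝ, v ≠ 0 ∧ A.mulVec v = μ' • v) → μ' ≤ μ

/-- `μ` is the smallest (real) eigenvalue of the matrix `A`. -/
def IsMinEigenvalue {n : ℕ} (A : Matrix (Fin n) (Fin n) ℝ) (μ : ℝ) : Prop :=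
  (∃ v : Fin n → ℝ, v ≠ 0 ∧ A.mulVec v = μ • v) ∧
  ∀ μ' : ℝ, (∃ v : Fin n → ℝ, v ≠ 0 ∧ A.mulVec v = μ' • v) → μ ≤ μ'

/-! At `r₀`, freeze an eigenvector `v` of `S r₀` for the top eigenvalue, say of norm one. By the
Rayleigh bound `⟨v, S r v⟩ ≤ μmax r` near `r₀`, with equality at `r₀`, so the difference has a local
maximum there and its derivative vanishes: `μmax'(r₀) = ⟨v, S'(r₀) v⟩`. Substituting the Riccati
equation gives `-μmax(r₀)² - ⟨v, R v⟩`, and `⟨v, R v⟩ ≥ λ_min(R)` by the Rayleigh bound for `R`. -/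

section QuadraticForm

open scoped MatrixOrder ComplexOrder

variable {𝕜 ι : Type*} [RCLike 𝕜] [Fintype ι]

/-- The real quadratic form `v ↦ re ⟨v, A v⟩` of a square matrix `A`, so that Rayleigh quotients
can be compared in `ℝ` over both `ℝ` and `ℂ`. The squared Euclidean norm of `v` is
`reQuadForm 1 v`, which avoids passing to `EuclideanSpace`. -/
def reQuadForm (A : Matrix ι ι 𝕜) (v : ι → 𝕜) : ℝ :=
  RCLike.re (star v ⬝ᵥ A *ᵥ v)

lemma reQuadForm_neg (A : Matrix ι ι 𝕜) (v : ι → 𝕜) : reQuadForm (-A) v = -reQuadForm A v := by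
  simp only [reQuadForm, neg_mulVec, dotProduct_neg, map_neg]

lemma reQuadForm_sub (A B : Matrix ι ι 𝕜) (v : ι → 𝕜) :
    reQuadForm (A - B) v = reQuadForm A v - reQuadForm B v := by
  simp only [reQuadForm, sub_mulVec, dotProduct_sub, map_sub]

lemma reQuadForm_mono {A B : Matrix ι ι 𝕜} (hAB : A ≤ B) (v : ι → 𝕜) :
    reQuadForm A v ≤ reQuadForm B v := by
  rw [← sub_nonneg, ← reQuadForm_sub]
  exact (Matrix.le_iff.mp hAB).re_dotProduct_nonneg v

lemma hasDerivAt_reQuadForm {S : ℝ → Matrix ι ι 𝕜} {S' : Matrix ι ι 𝕜} {r₀ : ℝ}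
    (hS : ∀ i j, HasDerivAt (fun r => S r i j) (S' i j) r₀) (v : ι → 𝕜) :
    HasDerivAt (fun r => reQuadForm (S r) v) (reQuadForm S' v) r₀ := by
  have hform : HasDerivAt (fun r => star v ⬝ᵥ S r *ᵥ v) (star v ⬝ᵥ S' *ᵥ v) r₀ :=
    HasDerivAt.fun_sum fun i _ => HasDerivAt.const_mul _ <|
      HasDerivAt.fun_sum fun j _ => (hS i j).mul_const _
  exact RCLike.reCLM.hasFDerivAt.comp_hasDerivAt r₀ hform

variable [DecidableEq ι]

lemma reQuadForm_one_pos {v : ι → 𝕜} (hv : v ≠ 0) : 0 < reQuadForm 1 v := by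
  rw [reQuadForm, one_mulVec]
  exact (RCLike.pos_iff.mp (dotProduct_star_self_pos_iff.mpr hv)).1

lemma reQuadForm_of_mulVec_eq_smul {A : Matrix ι ι 𝕜} {μ : ℝ} {v : ι → 𝕜} (hv : A *ᵥ v = μ • v) :
    reQuadForm A v = μ * reQuadForm 1 v := by
  rw [reQuadForm, hv, reQuadForm, one_mulVec, dotProduct_smul, RCLike.smul_re]

lemma reQuadForm_algebraMap (μ : ℝ) (v : ι → 𝕜) :
    reQuadForm (algebraMap ℝ (Matrix ι ι 𝕜) μ) v = μ * reQuadForm 1 v :=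
  reQuadForm_of_mulVec_eq_smul <| by rw [Algebra.algebraMap_eq_smul_one, smul_mulVec, one_mulVec]

lemma reQuadForm_le_of_mem_upperBounds_spectrum {A : Matrix ι ι 𝕜} (hA : A.IsHermitian) {μ : ℝ}
    (hμ : μ ∈ upperBounds (spectrum ℝ A)) (v : ι → 𝕜) :
    reQuadForm A v ≤ μ * reQuadForm 1 v :=
  reQuadForm_algebraMap μ v ▸
    reQuadForm_mono (le_algebraMap_of_spectrum_le hμ hA.isSelfAdjoint) v

lemma le_reQuadForm_of_mem_lowerBounds_spectrum {A : Matrix ι ι 𝕜} (hA : A.IsHermitian) {μ : ℝ}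
    (hμ : μ ∈ lowerBounds (spectrum ℝ A)) (v : ι → 𝕜) :
    μ * reQuadForm 1 v ≤ reQuadForm A v :=
  reQuadForm_algebraMap μ v ▸
    reQuadForm_mono (algebraMap_le_of_le_spectrum hμ hA.isSelfAdjoint) v

end QuadraticForm

lemma mem_spectrum_iff_exists_mulVec_eq_smul {R K ι : Type*} [CommRing R] [Field K] [Algebra R K]
    [Fintype ι] [DecidableEq ι] {A : Matrix ι ι K} {μ : R} :
    μ ∈ spectrum R A ↔ ∃ v : ι → K, v ≠ 0 ∧ A *ᵥ v = μ • v := by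
  rw [spectrum.mem_iff, isUnit_iff_isUnit_det, isUnit_iff_ne_zero, not_not,
    ← exists_mulVec_eq_zero_iff]
  simp only [Algebra.algebraMap_eq_smul_one, sub_mulVec, smul_mulVec, one_mulVec, sub_eq_zero,
    eq_comm]

lemma isMaxEigenvalue_iff_isGreatest_spectrum {n : ℕ} {A : Matrix (Fin n) (Fin n) ℝ} {μ : ℝ} :
    IsMaxEigenvalue A μ ↔ IsGreatest (spectrum ℝ A) μ := by
  simp only [IsMaxEigenvalue, IsGreatest, mem_upperBounds, mem_spectrum_iff_exists_mulVec_eq_smul]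

lemma isMinEigenvalue_iff_isLeast_spectrum {n : ℕ} {A : Matrix (Fin n) (Fin n) ℝ} {μ : ℝ} :
    IsMinEigenvalue A μ ↔ IsLeast (spectrum ℝ A) μ := by
  simp only [IsMinEigenvalue, IsLeast, mem_lowerBounds, mem_spectrum_iff_exists_mulVec_eq_smul]

section Riccati

variable {𝕜 ι : Type*} [RCLike 𝕜]

lemma isHermitian_of_hasDerivAt {S : ℝ → Matrix ι ι 𝕜} {S' : Matrix ι ι 𝕜} {r₀ : ℝ}
    (hSherm : ∀ᶠ r in 𝓝 r₀, (S r).IsHermitian)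
    (hS : ∀ i j, HasDerivAt (fun r => S r i j) (S' i j) r₀) : S'.IsHermitian := by
  refine IsHermitian.ext fun i j => (hS j i).star.unique ?_
  exact (hS i j).congr_of_eventuallyEq (hSherm.mono fun r hr => hr.apply i j)

variable [Fintype ι]

lemma isHermitian_of_riccati {S : ℝ → Matrix ι ι 𝕜} {R : Matrix ι ι 𝕜} {r₀ : ℝ}
    (hSherm : ∀ᶠ r in 𝓝 r₀, (S r).IsHermitian)
    (hODE : ∀ i j, HasDerivAt (fun r => S r i j) ((-(S r₀ * S r₀) - R) i j) r₀) :
    R.IsHermitian := by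
  have hS₀ : (S r₀).IsHermitian := hSherm.self_of_nhds
  have hsq : (-(S r₀ * S r₀)).IsHermitian := ((hS₀.commute_iff hS₀).mp (Commute.refl _)).neg
  exact sub_sub_cancel (-(S r₀ * S r₀)) R ▸ hsq.sub (isHermitian_of_hasDerivAt hSherm hODE)

variable [DecidableEq ι]

/-- The Hellmann–Feynman formula. -/
lemma deriv_max_eigenvalue_mul_eq_reQuadForm {S : ℝ → Matrix ι ι 𝕜} {S' : Matrix ι ι 𝕜}
    {μmax : ℝ → ℝ} {r₀ m : ℝ} {v : ι → 𝕜}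
    (hSherm : ∀ᶠ r in 𝓝 r₀, (S r).IsHermitian)
    (hS : ∀ i j, HasDerivAt (fun r => S r i j) (S' i j) r₀)
    (hμ : ∀ᶠ r in 𝓝 r₀, μmax r ∈ upperBounds (spectrum ℝ (S r)))
    (hm : HasDerivAt μmax m r₀) (hv : S r₀ *ᵥ v = μmax r₀ • v) :
    m * reQuadForm 1 v = reQuadForm S' v := by
  have hmax : IsLocalMax (fun r => reQuadForm (S r) v - μmax r * reQuadForm 1 v) r₀ := by
    filter_upwards [hSherm, hμ] with r hr hμr
    rw [reQuadForm_of_mulVec_eq_smul hv, sub_self, sub_nonpos]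
    exact reQuadForm_le_of_mem_upperBounds_spectrum hr hμr v
  have hderiv := (hasDerivAt_reQuadForm hS v).fun_sub (hm.mul_const (reQuadForm 1 v))
  exact (sub_eq_zero.mp (hmax.hasDerivAt_eq_zero hderiv)).symm

lemma reQuadForm_riccati_of_mulVec_eq_smul {A : Matrix ι ι 𝕜} {μ : ℝ} {v : ι → 𝕜}
    (hv : A *ᵥ v = μ • v) (R : Matrix ι ι 𝕜) :
    reQuadForm (-(A * A) - R) v = -μ ^ 2 * reQuadForm 1 v - reQuadForm R v := by
  have hsq : (A * A) *ᵥ v = μ ^ 2 • v := by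
    rw [← mulVec_mulVec, hv, mulVec_smul, hv, smul_smul, sq]
  rw [reQuadForm_sub, reQuadForm_neg, reQuadForm_of_mulVec_eq_smul hsq, neg_mul]

theorem mu_max_riccati_inequality_general {S : ℝ → Matrix ι ι 𝕜} {R : Matrix ι ι 𝕜}
    {μmax : ℝ → ℝ} {r₀ m lR : ℝ}
    (hSherm : ∀ᶠ r in 𝓝 r₀, (S r).IsHermitian)
    (hODE : ∀ i j, HasDerivAt (fun r => S r i j) ((-(S r₀ * S r₀) - R) i j) r₀)
    (hμ : ∀ᶠ r in 𝓝 r₀, IsGreatest (spectrum ℝ (S r)) (μmax r))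
    (hm : HasDerivAt μmax m r₀) (hlR : IsLeast (spectrum ℝ R) lR) :
    m ≤ -(μmax r₀) ^ 2 - lR := by
  have hRherm : R.IsHermitian := isHermitian_of_riccati hSherm hODE
  obtain ⟨v, hv_ne, hv⟩ := mem_spectrum_iff_exists_mulVec_eq_smul.mp hμ.self_of_nhds.1
  refine le_of_mul_le_mul_right ?_ (reQuadForm_one_pos hv_ne)
  calc m * reQuadForm 1 v
      = reQuadForm (-(S r₀ * S r₀) - R) v :=
        deriv_max_eigenvalue_mul_eq_reQuadForm hSherm hODE (hμ.mono fun _ h => h.2) hm hv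
    _ = -(μmax r₀) ^ 2 * reQuadForm 1 v - reQuadForm R v :=
        reQuadForm_riccati_of_mulVec_eq_smul hv R
    _ ≤ -(μmax r₀) ^ 2 * reQuadForm 1 v - lR * reQuadForm 1 v :=
        sub_le_sub_left (le_reQuadForm_of_mem_lowerBounds_spectrum hRherm hlR.2 v) _
    _ = (-(μmax r₀) ^ 2 - lR) * reQuadForm 1 v := (sub_mul _ _ _).symm

end Riccati

/-- **Riccati inequality for the largest eigenvalue.** Let `S, R : (a,b) →
Mat(n×n,ℝ)` take symmetric values, with `S` differentiable and satisfying the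
matrix Riccati equation `S' = -S² - R`. If the largest eigenvalue function
`μ_max` of `S` is differentiable at `r₀ ∈ (a,b)` with derivative `m`, then
`m ≤ -μ_max(r₀)² - λ_min(R(r₀))`. -/
theorem mu_max_riccati_inequality {n : ℕ} (a b : ℝ)
    (S R : ℝ → Matrix (Fin n) (Fin n) ℝ)
    (hSsym : ∀ r ∈ Ioo a b, (S r).IsSymm)
    (hRsym : ∀ r ∈ Ioo a b, (R r).IsSymm)
    (hODE : ∀ r ∈ Ioo a b, ∀ i j,
      HasDerivAt (fun s => S s i j) ((-(S r * S r) - R r) i j) r)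
    (μmax : ℝ → ℝ)
    (hμ : ∀ r ∈ Ioo a b, IsMaxEigenvalue (S r) (μmax r))
    (r₀ : ℝ) (hr₀ : r₀ ∈ Ioo a b)
    (m : ℝ) (hm : HasDerivAt μmax m r₀)
    (lR : ℝ) (hlR : IsMinEigenvalue (R r₀) lR) :
    m ≤ -(μmax r₀) ^ 2 - lR := by
  have hnear : ∀ᶠ r in 𝓝 r₀, r ∈ Ioo a b := Ioo_mem_nhds hr₀.1 hr₀.2
  exact mu_max_riccati_inequality_general
    (hnear.mono fun r hr => isHermitian_iff_isSymm.mpr (hSsym r hr))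
    (hODE r₀ hr₀) (hnear.mono fun r hr => isMaxEigenvalue_iff_isGreatest_spectrum.mp (hμ r hr))
    hm (isMinEigenvalue_iff_isLeast_spectrum.mp hlR)
end
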